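/- arXiv:1707.01867 — 3 statements merged into one kernel-verified Lean document; each statement's English description precedes it below -/
import Mathlib

section
/- Let a, b, c be complex numbers such that c is not a nonpositive integer. Define c_{2j+1} = −(a+j)(c−b+j)/((c+2j)(c+2j+1)) for j ≥ 0, c_{2j} = −(b+j)(c−a+j)/((c+2j−1)(c+2j)) for j ≥ 1, d_j = −c_j, a_0 = 2 − 4d_1, a_n = 2 − 4d_{2n+1} − 4d_{2n+2} for n ≥ 1, b_k² = 16 d_{2k+3} d_{2k+4} for k ≥ 0, and let b_k = (b_k²)^{1/2} be the principal complex square root of b_k². Then ∑_{k=0}^∞ |a_k| < ∞ and ∑_{k=0}^∞ |b_k − 1| < ∞; in particular lim_{k→∞} b_k = 1. -/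
open Filter Topology

lemma inv_bigO (z : ℂ) :
    (fun n : ℕ => (z + n)⁻¹) =O[atTop] (fun n : ℕ => ((n : ℝ))⁻¹) := by
  refine Asymptotics.IsBigO.of_bound 2 ?_
  obtain ⟨N, hN⟩ := exists_nat_gt (2 * ‖z‖)
  filter_upwards [eventually_ge_atTop (N + 1)] with n hn
  have hn' : (N : ℝ) + 1 ≤ n := by exact_mod_cast hn
  have hz := norm_nonneg z
  have h1 : (n : ℝ) ≤ ‖z + n‖ + ‖z‖ := by
    have := norm_sub_le (z + n) z
    simpa using this
  have hpos : (0 : ℝ) < n := by linarith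
  rw [norm_inv, norm_inv, Real.norm_of_nonneg hpos.le]
  have h2 : (n : ℝ) / 2 ≤ ‖z + n‖ := by linarith
  calc (‖z + n‖)⁻¹ ≤ ((n : ℝ) / 2)⁻¹ := inv_anti₀ (by positivity) h2
    _ = 2 * (n : ℝ)⁻¹ := by field_simp

lemma inv_bigO_one (z : ℂ) :
    (fun n : ℕ => (z + n)⁻¹) =O[atTop] (fun _ : ℕ => (1 : ℝ)) :=
  (inv_bigO z).trans (tendsto_inv_atTop_nhds_zero_nat.isBigO_one ℝ)

lemma ratio_id (u v p q n : ℂ) (hp : p + n ≠ 0) (hq : q + n ≠ 0) :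
    (u + n) * (v + n) / ((p + n) * (q + n)) - 1 =
      (q + n)⁻¹ * ((u + v - p - q) + (u * v - p * q - (u + v - p - q) * p) * (p + n)⁻¹) := by
  field_simp
  ring

lemma sqrt_bound (w : ℂ) : ‖w ^ ((1 : ℂ) / 2) - 1‖ ≤ ‖w - 1‖ := by
  have h1 : (w ^ ((1 : ℂ) / 2)) ^ 2 = w := by
    have := Complex.cpow_nat_inv_pow w (n := 2) (by norm_num)
    simpa using this
  have h2 : 0 ≤ (w ^ ((1 : ℂ) / 2)).re := by
    have := Complex.cpow_inv_two_re w
    rw [one_div, this]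
    positivity
  generalize w ^ ((1 : ℂ) / 2) = z at h1 h2
  rw [← h1, show z ^ 2 - 1 = (z - 1) * (z + 1) by ring, norm_mul]
  have h3 : 1 ≤ ‖z + 1‖ := by
    have := Complex.re_le_norm (z + 1)
    simp at this
    linarith
  nlinarith [norm_nonneg (z - 1)]

lemma bigO_summable (f : ℕ → ℂ)
    (h : f =O[atTop] (fun n : ℕ => ((n : ℝ))⁻¹ * ((n : ℝ))⁻¹)) : Summable f := by
  refine summable_of_isBigO_nat ?_ h
  have := Real.summable_nat_pow_inv.2 (show 1 < 2 by norm_num)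
  refine this.congr fun n => ?_
  rw [pow_two, mul_inv]

/-- The J-fraction coefficients satisfy `∑ |aₖ| < ∞` and `∑ |bₖ − 1| < ∞`, where
`bₖ = (bₖ²)^{1/2}` is the principal complex square root; in particular `bₖ → 1`. -/
theorem stmt_5 (a b c : ℂ) (hc : ∀ n : ℕ, c ≠ -(n : ℂ))
    (cseq : ℕ → ℂ)
    (hodd : ∀ j : ℕ,
      cseq (2 * j + 1) = -((a + j) * (c - b + j)) / ((c + 2 * j) * (c + 2 * j + 1)))
    (heven : ∀ j : ℕ, 1 ≤ j →
      cseq (2 * j) = -((b + j) * (c - a + j)) / ((c + 2 * j - 1) * (c + 2 * j)))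
    (d : ℕ → ℂ) (hd : ∀ k : ℕ, d k = -cseq k)
    (A : ℕ → ℂ) (hA0 : A 0 = 2 - 4 * d 1)
    (hA : ∀ n : ℕ, 1 ≤ n → A n = 2 - 4 * d (2 * n + 1) - 4 * d (2 * n + 2))
    (Bsq : ℕ → ℂ) (hBsq : ∀ k : ℕ, Bsq k = 16 * d (2 * k + 3) * d (2 * k + 4))
    (B : ℕ → ℂ) (hB : ∀ k : ℕ, B k = Bsq k ^ ((1 : ℂ) / 2)) :
    (Summable fun k : ℕ => ‖A k‖) ∧ (Summable fun k : ℕ => ‖B k - 1‖) ∧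
      Tendsto B atTop (𝓝 (1 : ℂ)) := by
  have hc' : ∀ n : ℕ, c + n ≠ 0 := fun n h => hc n (eq_neg_of_add_eq_zero_left h)
  have hp : ∀ j : ℕ, c / 2 + j ≠ 0 := fun j h => hc' (2 * j) (by push_cast; linear_combination 2 * h)
  have hq : ∀ j : ℕ, (c + 1) / 2 + j ≠ 0 := fun j h =>
    hc' (2 * j + 1) (by push_cast; linear_combination 2 * h)
  have hr : ∀ j : ℕ, (c / 2 + 1) + j ≠ 0 := fun j h =>
    hc' (2 * j + 2) (by push_cast; linear_combination 2 * h)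
  obtain ⟨s, hs⟩ : ∃ s, s = a - b - 1 / 2 := ⟨_, rfl⟩
  obtain ⟨K1, h1⟩ : ∃ K1 : ℂ, ∀ j : ℕ, 4 * d (2 * j + 1) - 1 =
      ((c + 1) / 2 + j)⁻¹ * (s + K1 * (c / 2 + j)⁻¹) := by
    refine ⟨a * (c - b) - c / 2 * ((c + 1) / 2) - s * (c / 2), fun j => ?_⟩
    · have := ratio_id a (c - b) (c / 2) ((c + 1) / 2) j (hp j) (hq j)
      rw [show a + (c - b) - c / 2 - (c + 1) / 2 = s by rw [hs]; ring] at this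
      rw [← this, hd, hodd,
        show (c + 2 * (j : ℂ)) * (c + 2 * j + 1) = 4 * ((c / 2 + j) * ((c + 1) / 2 + j)) by ring]
      have := hp j
      have := hq j
      generalize c / 2 + (j : ℂ) = x at *
      generalize (c + 1) / 2 + (j : ℂ) = y at *
      field_simp
  obtain ⟨K2, h2⟩ : ∃ K2 : ℂ, ∀ j : ℕ, 4 * d (2 * j + 2) - 1 =
      ((c + 1) / 2 + j)⁻¹ * (-s + K2 * ((c / 2 + 1) + j)⁻¹) := by
    refine ⟨(b + 1) * (c - a + 1) - (c / 2 + 1) * ((c + 1) / 2) - (-s) * (c / 2 + 1), fun j => ?_⟩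
    · have := ratio_id (b + 1) (c - a + 1) (c / 2 + 1) ((c + 1) / 2) j (hr j) (hq j)
      rw [show b + 1 + (c - a + 1) - (c / 2 + 1) - (c + 1) / 2 = -s by rw [hs]; ring] at this
      rw [← this, hd, show 2 * j + 2 = 2 * (j + 1) by ring, heven _ (by omega)]
      push_cast
      rw [show (c + 2 * ((j : ℂ) + 1) - 1) * (c + 2 * (j + 1)) =
          4 * ((c / 2 + 1 + j) * ((c + 1) / 2 + j)) by ring,
        show b + ((j : ℂ) + 1) = b + 1 + j by ring,
        show c - a + ((j : ℂ) + 1) = c - a + 1 + j by ring]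
      have := hr j
      have := hq j
      generalize c / 2 + 1 + (j : ℂ) = x at *
      generalize (c + 1) / 2 + (j : ℂ) = y at *
      field_simp
  have one (s : ℂ) : (fun _ : ℕ => s) =O[atTop] (fun _ : ℕ => (1 : ℝ)) :=
    Asymptotics.isBigO_const_const s one_ne_zero _
  have o1 : (fun j : ℕ => 4 * d (2 * j + 1) - 1) =O[atTop] (fun n : ℕ => ((n : ℝ))⁻¹) := by
    simp only [h1]
    simpa using (inv_bigO ((c + 1) / 2)).mul
      ((one s).add ((inv_bigO_one (c / 2)).const_mul_left K1))
  have o2 : (fun j : ℕ => 4 * d (2 * j + 2) - 1) =O[atTop] (fun n : ℕ => ((n : ℝ))⁻¹) := by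
    simp only [h2]
    simpa using (inv_bigO ((c + 1) / 2)).mul
      ((one (-s)).add ((inv_bigO_one (c / 2 + 1)).const_mul_left K2))
  have o3 : (fun j : ℕ => (4 * d (2 * j + 1) - 1) + (4 * d (2 * j + 2) - 1)) =O[atTop]
      (fun n : ℕ => ((n : ℝ))⁻¹ * ((n : ℝ))⁻¹) := by
    have := (inv_bigO ((c + 1) / 2)).mul
      (((inv_bigO (c / 2)).const_mul_left K1).add ((inv_bigO (c / 2 + 1)).const_mul_left K2))
    refine this.congr_left fun j => ?_
    rw [h1, h2]
    ring
  have hAs : Summable fun k : ℕ => ‖A k‖ := by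
    have h := (bigO_summable _ o3).norm
    rw [← summable_nat_add_iff 1] at h ⊢
    refine h.congr fun n => ?_
    rw [hA _ (by omega), ← norm_neg]
    congr 1
    ring
  have hBs : Summable fun k : ℕ => ‖B k - 1‖ := by
    have h := (bigO_summable _ (o3.add (o1.mul o2))).norm
    rw [← summable_nat_add_iff 1] at h
    refine h.of_nonneg_of_le (fun _ => norm_nonneg _) fun n => ?_
    rw [hB]
    refine (sqrt_bound _).trans (le_of_eq ?_)
    rw [hBsq, show 2 * (n + 1) + 1 = 2 * n + 3 by ring, show 2 * (n + 1) + 2 = 2 * n + 4 by ring]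
    congr 1
    ring
  refine ⟨hAs, hBs, ?_⟩
  rw [tendsto_iff_norm_sub_tendsto_zero]
  exact hBs.tendsto_atTop_zero
end

section
/- Let a, b, c be real numbers with 0 < a < c+1, 0 < b+1 < c+1, and c > 0, and set d₁ = a(c−b)/(c(c+1)) (so d₁ > 0). Let F(α,β,γ;w) = ∑_{n=0}^∞ ((α)_n (β)_n / ((γ)_n · n!)) wⁿ for complex w with |w| < 1. Then there exists a probability measure μ on the real interval [−2,2] such that for every complex z with |z − 2| > 4 and F(a,b+1,c+1; −4/(z−2)) ≠ 0 one has (−1/(4d₁)) · ( F(a,b,c; −4/(z−2)) / F(a,b+1,c+1; −4/(z−2)) − 1 ) = ∫_{[−2,2]} 1/(t − z) dμ(t). -/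
open scoped Nat
open MeasureTheory

/-- The Gauss hypergeometric series `F(a,b,c;z) = ∑ (a)ₙ (b)ₙ / ((c)ₙ n!) zⁿ`. -/
noncomputable def gaussHyper (a b c z : ℂ) : ℂ :=
  ∑' n : ℕ,
    ((ascPochhammer ℂ n).eval a * (ascPochhammer ℂ n).eval b /
      ((ascPochhammer ℂ n).eval c * (n ! : ℂ))) * z ^ n

lemma aux_spectral {H : Type*} [NormedAddCommGroup H] [InnerProductSpace ℂ H] [CompleteSpace H]
    (A : H →L[ℂ] H) (hA : ‖A‖ ≤ 1) (e : H) (he : ‖e‖ = 1) :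
    ∃ ν : Measure ℝ, IsProbabilityMeasure ν ∧ ν (Set.Icc (0 : ℝ) 1)ᶜ = 0 ∧
      ∀ n : ℕ, ∫ s, s ^ n ∂ν = (inner ℂ e (((star A * A) ^ n) e)).re := by
  set J := star A * A with hJ
  have hsa : IsSelfAdjoint J := IsSelfAdjoint.star_mul_self A
  let Φ := cfcHom (R := ℝ) hsa
  have : CompactSpace (spectrum ℝ J) := inferInstance
  have hpos : ∀ f : C(spectrum ℝ J, ℝ), 0 ≤ f → 0 ≤ (inner ℂ e (Φ f e)).re := by
    intro f hf
    have h1 : 0 ≤ Φ f := (cfcHom_nonneg_iff hsa).2 hf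
    have h2 := (ContinuousLinearMap.nonneg_iff_isPositive _).1 h1
    exact h2.re_inner_nonneg_right e
  let Λ : CompactlySupportedContinuousMap (spectrum ℝ J) ℝ →ₚ[ℝ] ℝ :=
  { toFun g := (inner ℂ e (Φ g.toContinuousMap e)).re
    map_add' g g' := by
      have : (g + g').toContinuousMap = g.toContinuousMap + g'.toContinuousMap := rfl
      rw [this, map_add]; simp [inner_add_right]
    map_smul' c g := by
      have : (c • g).toContinuousMap = c • g.toContinuousMap := rfl
      rw [this, map_smul, smul_apply, RCLike.real_smul_eq_coe_smul (K := ℂ) c, inner_smul_right]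
      simp
    monotone' g g' hgg' := by
      have h : 0 ≤ g'.toContinuousMap - g.toContinuousMap := by
        intro x
        simpa using hgg' x
      have := hpos _ h
      rw [map_sub] at this
      simp only [sub_apply, inner_sub_right, Complex.sub_re] at this
      simpa using this }
  let ρ := RealRMK.rieszMeasure Λ
  have hint : ∀ f : C(spectrum ℝ J, ℝ), ∫ x, f x ∂ρ = (inner ℂ e (Φ f e)).re := by
    intro f
    exact RealRMK.integral_rieszMeasure Λ
      ⟨f, HasCompactSupport.of_compactSpace _⟩
  have hmom : ∀ n : ℕ, ∫ x : spectrum ℝ J, (x : ℝ) ^ n ∂ρ = (inner ℂ e ((J ^ n) e)).re := by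
    intro n
    have := hint ((ContinuousMap.restrict (spectrum ℝ J) (ContinuousMap.id ℝ)) ^ n)
    rw [map_pow, cfcHom_id] at this
    simpa using this
  have hprob : IsProbabilityMeasure ρ := by
    have := hmom 0
    simp [he] at this
    have h2 : ρ.real Set.univ = 1 := by simpa using this
    constructor
    have h3 : (ρ Set.univ).toReal = 1 := h2
    rwa [ENNReal.toReal_eq_one_iff] at h3
  refine ⟨ρ.map Subtype.val, ?_, ?_, ?_⟩
  · exact Measure.isProbabilityMeasure_map (by fun_prop)
  · rw [Measure.map_apply (by fun_prop) (by measurability)]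
    convert measure_empty (μ := ρ)
    ext x
    simp only [Set.mem_preimage, Set.mem_compl_iff, Set.mem_empty_iff_false, iff_false, not_not]
    refine ⟨spectrum_star_mul_self_nonneg _ x.2, ?_⟩
    rcases subsingleton_or_nontrivial H with h | h
    · exact absurd he (by simp [Subsingleton.elim e 0])
    have h1 := spectrum.norm_le_norm_of_mem x.2
    have h2 : ‖J‖ ≤ 1 := by
      rw [hJ, CStarRing.norm_star_mul_self]
      nlinarith [norm_nonneg A]
    exact (le_abs_self _).trans (h1.trans h2)
  · intro n
    rw [← hmom n, integral_map (by fun_prop) (by fun_prop)]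

lemma aux_cs (g0 g1 g2 : ℝ) (h0 : g0 ≤ 1) (h1 : 0 ≤ g1) (h1' : g1 ≤ 1) (h2 : 0 ≤ g2) (x y : ℂ) :
    ‖((√(1 - g0) * √g1 : ℝ) : ℂ) * x + ((√(1 - g1) * √g2 : ℝ) : ℂ) * y‖ ^ 2 ≤
      (1 - g0) * ‖x‖ ^ 2 + g2 * ‖y‖ ^ 2 := by
  have e0 := Real.sq_sqrt (show 0 ≤ 1 - g0 by linarith)
  have e1 := Real.sq_sqrt h1
  have e1' := Real.sq_sqrt (show 0 ≤ 1 - g1 by linarith)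
  have e2 := Real.sq_sqrt h2
  have hn : ‖((√(1 - g0) * √g1 : ℝ) : ℂ) * x + ((√(1 - g1) * √g2 : ℝ) : ℂ) * y‖ ≤
      √(1 - g0) * √g1 * ‖x‖ + √(1 - g1) * √g2 * ‖y‖ := by
    refine (norm_add_le _ _).trans (le_of_eq ?_)
    rw [norm_mul, norm_mul, Complex.norm_real, Complex.norm_real, Real.norm_of_nonneg (by positivity),
      Real.norm_of_nonneg (by positivity)]
  refine (pow_le_pow_left₀ (norm_nonneg _) hn 2).trans ?_
  generalize √(1 - g0) = p at *
  generalize √g1 = q at *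
  generalize √(1 - g1) = r at *
  generalize √g2 = s at *
  generalize ‖x‖ = X at *
  generalize ‖y‖ = Y at *
  have : (p * q * X + r * s * Y) ^ 2 = (q^2 + r^2) * (p^2 * X^2 + s^2 * Y^2) - (q * s * Y - r * p * X)^2 := by ring
  rw [this, e0, e1, e1', e2]
  nlinarith [sq_nonneg (q * s * Y - r * p * X)]

lemma aux_op (g : ℕ → ℝ) (h0 : ∀ n, 0 ≤ g n) (h1 : ∀ n, g n ≤ 1) :
    ∃ A : lp (fun _ : ℕ => ℂ) 2 →L[ℂ] lp (fun _ : ℕ => ℂ) 2, ‖A‖ ≤ 1 ∧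
      ∀ x n, (A x : ℕ → ℂ) n = ((√(1 - g (2 * n)) * √(g (2 * n + 1)) : ℝ) : ℂ) * x n +
        ((√(1 - g (2 * n + 1)) * √(g (2 * n + 2)) : ℝ) : ℂ) * x (n + 1) := by
  have key : ∀ x : lp (fun _ : ℕ => ℂ) 2, ∀ n, ‖((√(1 - g (2 * n)) * √(g (2 * n + 1)) : ℝ) : ℂ) * x n +
        ((√(1 - g (2 * n + 1)) * √(g (2 * n + 2)) : ℝ) : ℂ) * x (n + 1)‖ ^ 2 ≤
      (1 - g (2 * n)) * ‖x n‖ ^ 2 + g (2 * n + 2) * ‖x (n + 1)‖ ^ 2 := fun x n =>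
    aux_cs _ _ _ (h1 _) (h0 _) (h1 _) (h0 _) _ _
  have hS : ∀ x : lp (fun _ : ℕ => ℂ) 2, HasSum (fun n => ‖x n‖ ^ 2) (‖x‖ ^ 2) := by
    intro x
    have := lp.hasSum_norm (p := 2) (by norm_num) x
    simpa using this
  have hS1 : ∀ x : lp (fun _ : ℕ => ℂ) 2, Summable (fun n => (g (2 * n)) * ‖x n‖ ^ 2) := by
    intro x
    refine (hS x).summable.of_nonneg_of_le (fun n => mul_nonneg (h0 _) (by positivity)) (fun n => ?_)
    exact mul_le_of_le_one_left (by positivity) (h1 _)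
  have hT : ∀ x : lp (fun _ : ℕ => ℂ) 2, HasSum (fun n => (1 - g (2 * n)) * ‖x n‖ ^ 2 + g (2 * n + 2) * ‖x (n + 1)‖ ^ 2)
      (‖x‖ ^ 2 - g 0 * ‖x 0‖ ^ 2) := by
    intro x
    have hs := (hS1 x).hasSum
    have hs2 := (hasSum_nat_add_iff' 1).2 hs
    have := ((hS x).sub hs).add hs2
    have e1 : (fun n => (1 - g (2 * n)) * ‖x n‖ ^ 2 + g (2 * n + 2) * ‖x (n + 1)‖ ^ 2) =
        fun b => ‖x b‖ ^ 2 - g (2 * b) * ‖x b‖ ^ 2 + g (2 * (b + 1)) * ‖x (b + 1)‖ ^ 2 := by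
      funext n
      rw [show 2 * (n + 1) = 2 * n + 2 by ring]; ring
    rw [e1]
    have e2 : ‖x‖ ^ 2 - g 0 * ‖x 0‖ ^ 2 = ‖x‖ ^ 2 - ∑' (b : ℕ), g (2 * b) * ‖x b‖ ^ 2 +
      (∑' (b : ℕ), g (2 * b) * ‖x b‖ ^ 2 - ∑ i ∈ Finset.range 1, g (2 * i) * ‖x i‖ ^ 2) := by
      rw [Finset.sum_range_one, mul_zero]; ring
    rw [e2]
    exact this
  let L : lp (fun _ : ℕ => ℂ) 2 →ₗ[ℂ] lp (fun _ : ℕ => ℂ) 2 :=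
  { toFun x := ⟨fun n => ((√(1 - g (2 * n)) * √(g (2 * n + 1)) : ℝ) : ℂ) * x n +
        ((√(1 - g (2 * n + 1)) * √(g (2 * n + 2)) : ℝ) : ℂ) * x (n + 1), by
        apply memℓp_gen
        simp only [ENNReal.toReal_ofNat, Real.rpow_ofNat]
        exact (hT x).summable.of_nonneg_of_le (fun n => by positivity) (key x)⟩
    map_add' x y := by
      ext n
      change _ * (x n + y n) + _ * (x (n + 1) + y (n + 1)) = (_ * x n + _ * x (n + 1)) + (_ * y n + _ * y (n + 1))
      ring
    map_smul' c x := by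
      ext n
      simp
      ring }
  have hL : ∀ x, ‖L x‖ ≤ 1 * ‖x‖ := by
    intro x
    rw [one_mul, ← sq_le_sq₀ (norm_nonneg _) (norm_nonneg _)]
    have := hasSum_le (key x) (hS (L x)) (hT x)
    have h2 := mul_nonneg (h0 0) (sq_nonneg ‖x 0‖)
    linarith
  refine ⟨L.mkContinuous 1 hL, L.mkContinuous_norm_le zero_le_one hL, fun x n => rfl⟩

lemma aux_adj (α β : ℕ → ℝ) (A : lp (fun _ : ℕ => ℂ) 2 →L[ℂ] lp (fun _ : ℕ => ℂ) 2)
    (hA : ∀ x n, (A x : ℕ → ℂ) n = (α n : ℂ) * x n + (β n : ℂ) * x (n + 1))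
    (y : lp (fun _ : ℕ => ℂ) 2) :
    (star A y : ℕ → ℂ) 0 = (α 0 : ℂ) * y 0 ∧
    ∀ n, (star A y : ℕ → ℂ) (n + 1) = (α (n + 1) : ℂ) * y (n + 1) + (β n : ℂ) * y n := by
  have h : ∀ n, (star A y : ℕ → ℂ) n = inner ℂ (A (lp.single 2 n (1 : ℂ))) y := by
    intro n
    rw [← ContinuousLinearMap.adjoint_inner_right, lp.inner_single_left, ContinuousLinearMap.star_eq_adjoint]
    simp
  constructor
  · rw [h]
    have : A (lp.single 2 0 (1 : ℂ)) = lp.single 2 0 (α 0 : ℂ) := by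
      ext n
      rw [hA]
      rcases n with _ | n <;> simp
    rw [this, lp.inner_single_left]
    simp; ring
  · intro n
    rw [h]
    have : A (lp.single 2 (n + 1) (1 : ℂ)) =
        lp.single 2 (n + 1) (α (n + 1) : ℂ) + lp.single 2 n (β n : ℂ) := by
      ext m
      rw [hA]
      simp only [lp.coeFn_single, lp.coeFn_add, Pi.add_apply, Pi.single_apply, add_left_inj]
      split_ifs <;> simp_all
    rw [this, inner_add_left, lp.inner_single_left, lp.inner_single_left]
    simp; ring

lemma aux_mom (g : ℕ → ℝ) (h0 : ∀ n, 0 ≤ g n) (h1 : ∀ n, g n ≤ 1) (G : ℕ → PowerSeries ℝ)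
    (hG : ∀ n, G n = G (n + 1) - PowerSeries.C ((1 - g n) * g (n + 1)) * PowerSeries.X * G (n + 2)) :
    ∃ ν : Measure ℝ, IsProbabilityMeasure ν ∧ ν (Set.Icc (0 : ℝ) 1)ᶜ = 0 ∧
      ∀ j, ∑ p ∈ Finset.HasAntidiagonal.antidiagonal j, (∫ s, s ^ p.1 ∂ν) * PowerSeries.coeff p.2 (G 0) =
        PowerSeries.coeff j (G 1) := by
  obtain ⟨A, hA1, hA⟩ := aux_op g h0 h1
  set α : ℕ → ℝ := fun n => √(1 - g (2 * n)) * √(g (2 * n + 1)) with hα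
  set β : ℕ → ℝ := fun n => √(1 - g (2 * n + 1)) * √(g (2 * n + 2)) with hβ
  have hα2 : ∀ n, α n * α n = (1 - g (2 * n)) * g (2 * n + 1) := by
    intro n
    have e0 := Real.mul_self_sqrt (show 0 ≤ 1 - g (2 * n) by linarith [h1 (2 * n)])
    have e1 := Real.mul_self_sqrt (h0 (2 * n + 1))
    calc α n * α n = (√(1 - g (2 * n)) * √(1 - g (2 * n))) * (√(g (2 * n + 1)) * √(g (2 * n + 1))) := by
          simp only [hα]; ring
      _ = _ := by rw [e0, e1]
  have hβ2 : ∀ n, β n * β n = (1 - g (2 * n + 1)) * g (2 * n + 2) := by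
    intro n
    have e0 := Real.mul_self_sqrt (show 0 ≤ 1 - g (2 * n + 1) by linarith [h1 (2 * n + 1)])
    have e1 := Real.mul_self_sqrt (h0 (2 * n + 2))
    calc β n * β n = (√(1 - g (2 * n + 1)) * √(1 - g (2 * n + 1))) * (√(g (2 * n + 2)) * √(g (2 * n + 2))) := by
          simp only [hβ]; ring
      _ = _ := by rw [e0, e1]
  replace hA : ∀ x n, (A x : ℕ → ℂ) n = (α n : ℂ) * x n + (β n : ℂ) * x (n + 1) := hA
  have hadj := aux_adj α β A hA
  let e : lp (fun _ : ℕ => ℂ) 2 := lp.single 2 0 (1 : ℂ)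
  have he : ‖e‖ = 1 := by simp [e, lp.norm_single]
  obtain ⟨ν, hν, hν0, hm⟩ := aux_spectral A hA1 e he
  refine ⟨ν, hν, hν0, ?_⟩
  let c : ℕ → ℝ := fun n => ∏ i ∈ Finset.range n, (α i * β i)
  have hc0 : c 0 = 1 := by simp [c]
  have hc : ∀ n, c (n + 1) = c n * (α n * β n) := fun n => Finset.prod_range_succ _ _
  have hcoef : ∀ n m, PowerSeries.coeff m (G n) = PowerSeries.coeff m (G (n + 1)) -
      ((1 - g n) * g (n + 1)) * PowerSeries.coeff m (PowerSeries.X * G (n + 2)) := by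
    intro n m
    conv_lhs => rw [hG n]
    rw [map_sub, mul_assoc, PowerSeries.coeff_C_mul]
  have hcoef' : ∀ k n m, PowerSeries.coeff m (PowerSeries.X ^ k * G n) =
      PowerSeries.coeff m (PowerSeries.X ^ k * G (n + 1)) -
      ((1 - g n) * g (n + 1)) * PowerSeries.coeff m (PowerSeries.X ^ (k + 1) * G (n + 2)) := by
    intro k n m
    conv_lhs => rw [hG n]
    rw [mul_sub, map_sub, ← PowerSeries.coeff_C_mul]
    congr 2
    ring
  let U : ℕ → lp (fun _ : ℕ => ℂ) 2 := fun j =>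
    ⟨fun i => ((c i * PowerSeries.coeff j (PowerSeries.X ^ i * G (2 * i + 1)) : ℝ) : ℂ), by
      apply memℓp_gen
      apply summable_of_ne_finset_zero (s := Finset.range (j + 1))
      intro b hb
      have : ¬ b ≤ j := by simpa using hb
      simp [PowerSeries.coeff_X_pow_mul', this]⟩
  have hU : ∀ j i, (U j : ℕ → ℂ) i =
    ((c i * PowerSeries.coeff j (PowerSeries.X ^ i * G (2 * i + 1)) : ℝ) : ℂ) := fun j i => rfl
  have hW : ∀ j i, (A (U j) : ℕ → ℂ) i =
    ((α i * c i * PowerSeries.coeff j (PowerSeries.X ^ i * G (2 * i + 2)) : ℝ) : ℂ) := by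
    intro j i
    rw [hA, hU, hU, hc]
    rw [← Complex.ofReal_mul, ← Complex.ofReal_mul, ← Complex.ofReal_add]
    congr 1
    rw [hcoef' i (2 * i + 1) j, ← hβ2, show 2 * (i + 1) + 1 = 2 * i + 1 + 2 by ring]
    ring
  have hrec : ∀ j, U (j + 1) = (star A * A) (U j) + ((PowerSeries.coeff (j + 1) (G 0) : ℝ) : ℂ) • e := by
    intro j
    ext i
    rw [lp.coeFn_add, Pi.add_apply, lp.coeFn_smul, Pi.smul_apply, mul_apply_eq_comp]
    rcases i with _ | i
    · rw [(hadj _).1, hW, hU, hcoef 0 (j + 1), PowerSeries.coeff_succ_X_mul]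
      have := hα2 0
      simp only [e, mul_zero, zero_add] at this ⊢
      rw [← this]
      simp [hc0]
      ring
    · rw [(hadj _).2, hW, hW, hU]
      simp only [e, lp.coeFn_single, Pi.single_apply, Nat.succ_ne_zero, if_false, smul_zero, add_zero]
      rw [← Complex.ofReal_mul, ← Complex.ofReal_mul, ← Complex.ofReal_add]
      congr 1
      have h6 : PowerSeries.coeff (j + 1) (PowerSeries.X ^ (i + 1) * G (2 * i + 3)) =
          PowerSeries.coeff j (PowerSeries.X ^ i * G (2 * i + 3)) := by
        rw [pow_succ', mul_assoc, PowerSeries.coeff_succ_X_mul]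
      have h3 := hcoef' i (2 * i + 2) j
      have h4 := hα2 (i + 1)
      rw [show 2 * (i + 1) = 2 * i + 2 by ring] at h4 ⊢
      rw [← h4] at h3
      rw [h6, h3, hc]
      ring
  have hU0 : U 0 = ((PowerSeries.coeff (0) (G 0) : ℝ) : ℂ) • e := by
    ext i
    rw [lp.coeFn_smul, Pi.smul_apply, hU]
    rcases i with _ | i
    · have := hcoef 0 0
      simp at this
      simp [hc0, e, this]
    · simp [e, PowerSeries.coeff_X_pow_mul']
  have hsum : ∀ j, U j = ∑ p ∈ Finset.HasAntidiagonal.antidiagonal j,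
      ((PowerSeries.coeff (p.2) (G 0) : ℝ) : ℂ) • ((star A * A) ^ p.1) e := by
    intro j
    induction j with
    | zero => simp [hU0]
    | succ j ih =>
      rw [hrec, ih, Finset.Nat.sum_antidiagonal_succ, map_sum, add_comm]
      congr 1
      refine Finset.sum_congr rfl fun p _ => ?_
      rw [map_smul, pow_succ', mul_apply_eq_comp (star A * A) ((star A * A) ^ p.1)]
  intro j
  have h1 : inner ℂ e (U j) = ((PowerSeries.coeff j (G 1) : ℝ) : ℂ) := by
    rw [lp.inner_single_left, hU]
    simp [hc0]
  have h2 := congrArg Complex.re h1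
  rw [hsum, inner_sum, Complex.re_sum, Complex.ofReal_re] at h2
  rw [← h2]
  refine Finset.sum_congr rfl fun p _ => ?_
  rw [hm, inner_smul_right, Complex.re_ofReal_mul, mul_comm]

/-- real coefficient of the hypergeometric series -/
noncomputable def hcoef (a b c : ℝ) (n : ℕ) : ℝ :=
  (ascPochhammer ℝ n).eval a * (ascPochhammer ℝ n).eval b / ((ascPochhammer ℝ n).eval c * (n ! : ℝ))

lemma hcoef_symm (a b c : ℝ) (n : ℕ) : hcoef a b c n = hcoef b a c n := by
  unfold hcoef; ring

lemma poch_left (x : ℝ) (n : ℕ) : (ascPochhammer ℝ (n + 1)).eval x = x * (ascPochhammer ℝ n).eval (x + 1) := by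
  rw [ascPochhammer_succ_left]; simp

lemma hcoef_rec (a b c : ℝ) (hc : 0 < c) (n : ℕ) :
    hcoef a b c (n + 1) = hcoef a (b + 1) (c + 1) (n + 1) -
      a * (c - b) / (c * (c + 1)) * hcoef (a + 1) (b + 1) (c + 2) n := by
  unfold hcoef
  have hT : 0 < (ascPochhammer ℝ n).eval (c + 1) := ascPochhammer_pos n _ (by linarith)
  have hR : (c + 1) * (ascPochhammer ℝ n).eval (c + 2) = (ascPochhammer ℝ n).eval (c + 1) * (c + 1 + n) := by
    rw [← ascPochhammer_succ_eval, poch_left, show c + 1 + 1 = c + 2 by ring]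
  have hR' : (ascPochhammer ℝ n).eval (c + 2) = (ascPochhammer ℝ n).eval (c + 1) * (c + 1 + n) / (c + 1) := by
    rw [← hR]; field_simp
  rw [poch_left a, poch_left b, poch_left c, ascPochhammer_succ_eval n (b + 1),
    ascPochhammer_succ_eval n (c + 1), hR', Nat.factorial_succ]
  have hn : 0 < c + 1 + (n : ℝ) := by positivity
  have hf : (0 : ℝ) < n ! := by positivity
  push_cast
  generalize (ascPochhammer ℝ n).eval (c + 1) = T at *
  generalize (ascPochhammer ℝ n).eval (a + 1) = P at *
  generalize (ascPochhammer ℝ n).eval (b + 1) = Q at *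
  generalize (n ! : ℝ) = f at *
  have hc1 : 0 < c + 1 := by linarith
  field_simp
  ring

lemma hcoef_zero (a b c : ℝ) : hcoef a b c 0 = 1 := by simp [hcoef]

/-- parameters -/
def par (a b c : ℝ) : ℕ → ℝ × ℝ × ℝ
  | 0 => (a, b, c)
  | n + 1 => ((par a b c n).2.1 + 1, (par a b c n).1, (par a b c n).2.2 + 1)

lemma par_inv (a b c : ℝ) (ha : 0 < a) (hac : a < c) (hb : 0 < b + 1) (hbc : b < c) (n : ℕ) :
    0 < (par a b c n).1 ∧ (par a b c n).1 < (par a b c n).2.2 ∧ 0 < (par a b c n).2.1 + 1 ∧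
      (par a b c n).2.1 < (par a b c n).2.2 := by
  induction n with
  | zero => exact ⟨ha, hac, hb, hbc⟩
  | succ n ih =>
    obtain ⟨h1, h2, h3, h4⟩ := ih
    simp only [par]
    refine ⟨h3, ?_, ?_, ?_⟩ <;> linarith

lemma aux_hyp (a b c : ℝ) (ha : 0 < a) (hac : a < c) (hb : 0 < b + 1) (hbc : b < c) :
    ∃ ν : Measure ℝ, IsProbabilityMeasure ν ∧ ν (Set.Icc (0 : ℝ) 1)ᶜ = 0 ∧
      ∀ j, ∑ p ∈ Finset.HasAntidiagonal.antidiagonal j, (∫ s, s ^ p.1 ∂ν) * hcoef a b c p.2 =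
        hcoef (b + 1) a (c + 1) j := by
  have hinv := par_inv a b c ha hac hb hbc
  obtain ⟨ν, h1, h2, h3⟩ := aux_mom (fun n => 1 - (par a b c n).1 / (par a b c n).2.2)
    (by
      intro n
      obtain ⟨h1, h2, h3, h4⟩ := hinv n
      have : (par a b c n).1 / (par a b c n).2.2 ≤ 1 := by
        rw [div_le_one (by linarith)]; exact h2.le
      simpa using this)
    (by
      intro n
      obtain ⟨h1, h2, h3, h4⟩ := hinv n
      have : 0 ≤ (par a b c n).1 / (par a b c n).2.2 := div_nonneg h1.le (by linarith)
      simpa using this)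
    (fun n => PowerSeries.mk (hcoef (par a b c n).1 (par a b c n).2.1 (par a b c n).2.2))
    (by
      intro n
      obtain ⟨h1, h2, h3, h4⟩ := hinv n
      simp only [par]
      clear hinv
      generalize (par a b c n).1 = a' at *
      generalize (par a b c n).2.1 = b' at *
      generalize (par a b c n).2.2 = c' at *
      clear ha hac hb hbc a b c
      rename' a' => a, b' => b, c' => c
      have hc : 0 < c := by linarith
      have hk : (1 - (1 - a / c)) * (1 - (b + 1) / (c + 1)) = a * (c - b) / (c * (c + 1)) := by
        field_simp; ring
      rw [hk]
      ext m
      rw [map_sub, mul_assoc, PowerSeries.coeff_C_mul, PowerSeries.coeff_mk, PowerSeries.coeff_mk]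
      rcases m with _ | m
      · simp [hcoef_zero]
      · rw [PowerSeries.coeff_succ_X_mul, PowerSeries.coeff_mk, hcoef_rec a b c hc m, hcoef_symm (b + 1) a,
          show c + 1 + 1 = c + 2 by ring])
  refine ⟨ν, h1, h2, fun j => ?_⟩
  have := h3 j
  simpa [par] using this

lemma hcoef_cast (a b c : ℝ) (n : ℕ) : ((hcoef a b c n : ℝ) : ℂ) =
    (ascPochhammer ℂ n).eval (a : ℂ) * (ascPochhammer ℂ n).eval (b : ℂ) /
      ((ascPochhammer ℂ n).eval (c : ℂ) * (n ! : ℂ)) := by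
  have h : ∀ x : ℝ, (((ascPochhammer ℝ n).eval x : ℝ) : ℂ) = (ascPochhammer ℂ n).eval (x : ℂ) := by
    intro x
    induction n with
    | zero => simp
    | succ n ih => rw [ascPochhammer_succ_eval, ascPochhammer_succ_eval, ← ih]; push_cast; rfl
  unfold hcoef
  push_cast
  rw [h, h, h]

lemma gauss_eq (a b c : ℝ) (w : ℂ) : gaussHyper a b c w = ∑' n, (hcoef a b c n : ℂ) * w ^ n := by
  unfold gaussHyper
  simp_rw [hcoef_cast]

lemma gauss_summable (a b c : ℝ) (ha : 0 < a) (hb : 0 < b) (hc : 0 < c) (w : ℂ) (hw : ‖w‖ < 1) :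
    Summable (fun n => ‖(hcoef a b c n : ℂ) * w ^ n‖) := by
  have hne : ∀ x : ℝ, 0 < x → ∀ k : ℕ, (k : ℂ) ≠ -(x : ℂ) := by
    intro x hx k h
    have h2 : (k : ℝ) = -x := by exact_mod_cast h
    have : (0 : ℝ) ≤ k := by positivity
    linarith
  have hr := ordinaryHypergeometricSeries_radius_eq_one ℂ (a : ℂ) (b : ℂ) (c : ℂ)
    (fun k => ⟨hne a ha k, hne b hb k, hne c hc k⟩)
  have hs := (ordinaryHypergeometricSeries ℂ (a : ℂ) (b : ℂ) (c : ℂ)).summable_norm_apply (x := w)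
    (by
      rw [hr, Metric.mem_eball, edist_zero_right, ← ofReal_norm]
      exact ENNReal.ofReal_lt_one.2 hw)
  refine hs.congr fun n => ?_
  rw [ordinaryHypergeometricSeries_apply_eq, hcoef_cast]
  congr 1
  rw [smul_eq_mul]
  field_simp

lemma gauss_rec (a b c : ℝ) (ha : 0 < a) (hb : 0 < b + 1) (hc : 0 < c) (w : ℂ) (hw : ‖w‖ < 1) :
    gaussHyper a b c w = gaussHyper a ((b + 1 : ℝ) : ℂ) ((c + 1 : ℝ) : ℂ) w -
      ((a * (c - b) / (c * (c + 1)) : ℝ) : ℂ) * w * gaussHyper ((a + 1 : ℝ) : ℂ) ((b + 1 : ℝ) : ℂ) ((c + 2 : ℝ) : ℂ) w := by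
  rw [gauss_eq, gauss_eq, gauss_eq]
  have h1 := (gauss_summable a (b + 1) (c + 1) ha hb (by linarith) w hw).of_norm.hasSum
  have h2 := (gauss_summable (a + 1) (b + 1) (c + 2) (by linarith) hb (by linarith) w hw).of_norm.hasSum
  apply HasSum.tsum_eq
  rw [← hasSum_nat_add_iff' 1]
  have h3 := ((hasSum_nat_add_iff' 1).2 h1).sub (h2.mul_left (((a * (c - b) / (c * (c + 1)) : ℝ) : ℂ) * w))
  convert h3 using 1
  · funext n
    rw [hcoef_rec a b c hc n]
    push_cast
    ring
  · simp [hcoef_zero]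
    ring

lemma aux_int (ν : Measure ℝ) [IsProbabilityMeasure ν] (h0 : ν (Set.Icc (0 : ℝ) 1)ᶜ = 0)
    (w : ℂ) (hw : ‖w‖ < 1) :
    Summable (fun n : ℕ => ‖((∫ s, s ^ n ∂ν : ℝ) : ℂ) * w ^ n‖) ∧
    HasSum (fun n : ℕ => ((∫ s, s ^ n ∂ν : ℝ) : ℂ) * w ^ n) (∫ s, 1 / (1 - (s : ℂ) * w) ∂ν) := by
  have hae : ∀ᵐ s ∂ν, s ∈ Set.Icc (0 : ℝ) 1 := h0
  have hg := summable_geometric_of_lt_one (norm_nonneg w) hw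
  constructor
  · refine hg.of_nonneg_of_le (fun n => norm_nonneg _) fun n => ?_
    rw [norm_mul, norm_pow, Complex.norm_real]
    refine mul_le_of_le_one_left (by positivity) ?_
    have := norm_integral_le_of_norm_le_const (μ := ν) (f := fun s => s ^ n) (C := 1) (by
      filter_upwards [hae] with s hs
      rw [norm_pow, Real.norm_of_nonneg hs.1]
      exact pow_le_one₀ hs.1 hs.2)
    simpa using this
  · have := hasSum_integral_of_dominated_convergence (μ := ν) (F := fun (n : ℕ) (s : ℝ) => ((s : ℂ) * w) ^ n)
      (f := fun s => 1 / (1 - (s : ℂ) * w)) (fun n _ => ‖w‖ ^ n) (fun n => by fun_prop)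
      (fun n => by
        filter_upwards [hae] with s hs
        rw [norm_pow, norm_mul, Complex.norm_real, Real.norm_of_nonneg hs.1]
        exact pow_le_pow_left₀ (by have := hs.1; positivity) (mul_le_of_le_one_left (norm_nonneg _) hs.2) n)
      (Filter.Eventually.of_forall fun _ => hg) (integrable_const _)
      (by
        filter_upwards [hae] with s hs
        rw [one_div]
        apply hasSum_geometric_of_norm_lt_one
        rw [norm_mul, Complex.norm_real, Real.norm_of_nonneg hs.1]
        exact (mul_le_of_le_one_left (norm_nonneg _) hs.2).trans_lt hw)
    have e : (fun n : ℕ => ((∫ s, s ^ n ∂ν : ℝ) : ℂ) * w ^ n) =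
        fun n : ℕ => ∫ s : ℝ, ((s : ℂ) * w) ^ n ∂ν := by
      funext n
      simp_rw [mul_pow]
      rw [integral_mul_const, ← integral_complex_ofReal]
      push_cast
      rfl
    rw [e]
    exact this

/-- In the classical case, the m-function `B(a,b,c;z)` is a Stieltjes transform of a
probability measure on `[-2,2]`. -/
theorem stmt_8 (a b c : ℝ) (ha0 : 0 < a) (ha1 : a < c + 1)
    (hb0 : 0 < b + 1) (hb1 : b + 1 < c + 1) (hc : 0 < c)
    (d1 : ℝ) (hd1 : d1 = a * (c - b) / (c * (c + 1))) :
    ∃ μ : Measure ℝ, IsProbabilityMeasure μ ∧ μ (Set.Icc (-2 : ℝ) 2)ᶜ = 0 ∧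
      ∀ z : ℂ, 4 < ‖z - 2‖ →
        gaussHyper (a : ℂ) ((b : ℂ) + 1) ((c : ℂ) + 1) (-4 / (z - 2)) ≠ 0 →
        (-1 / (4 * (d1 : ℂ))) *
            (gaussHyper (a : ℂ) (b : ℂ) (c : ℂ) (-4 / (z - 2)) /
                gaussHyper (a : ℂ) ((b : ℂ) + 1) ((c : ℂ) + 1) (-4 / (z - 2)) - 1) =
          ∫ t : ℝ, 1 / ((t : ℂ) - z) ∂μ := by
  subst hd1
  obtain ⟨ν, hν, hν0, hm⟩ := aux_hyp (b + 1) a (c + 1) hb0 hb1 (by linarith) ha1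
  refine ⟨ν.map (fun s => 2 - 4 * s), Measure.isProbabilityMeasure_map (by fun_prop), ?_, ?_⟩
  · rw [Measure.map_apply (by fun_prop) (by measurability)]
    refine measure_mono_null ?_ hν0
    intro s hs hs'
    apply hs
    constructor <;> linarith [hs'.1, hs'.2]
  intro z hz hF
  rw [integral_map (by fun_prop) (by
    apply Measurable.aestronglyMeasurable
    fun_prop)]
  have hz0 : z - 2 ≠ 0 := by
    intro h; rw [h, norm_zero] at hz; linarith
  set w : ℂ := -4 / (z - 2) with hwdef
  have hw : ‖w‖ < 1 := by
    rw [hwdef, norm_div, norm_neg, div_lt_one (by linarith)]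
    simpa using hz
  have hw4 : w * (z - 2) = -4 := by rw [hwdef]; field_simp
  have hw0 : w ≠ 0 := by
    intro h; rw [h] at hw4; norm_num at hw4
  have hrec := gauss_rec a b c ha0 hb0 hc w hw
  obtain ⟨hs1, hs2⟩ := aux_int ν hν0 w hw
  have hG0 := gauss_summable a (b + 1) (c + 1) ha0 hb0 (by linarith) w hw
  have hprod := tsum_mul_tsum_eq_tsum_sum_antidiagonal_of_summable_norm hs1 hG0
  rw [hs2.tsum_eq, ← gauss_eq] at hprod
  have hR : (∫ s, 1 / (1 - (s : ℂ) * w) ∂ν) * gaussHyper a ((b + 1 : ℝ) : ℂ) ((c + 1 : ℝ) : ℂ) w =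
      gaussHyper ((a + 1 : ℝ) : ℂ) ((b + 1 : ℝ) : ℂ) ((c + 2 : ℝ) : ℂ) w := by
    rw [hprod, gauss_eq]
    refine tsum_congr fun j => ?_
    have h := hm j
    rw [show c + 1 + 1 = c + 2 by ring] at h
    rw [← h]
    push_cast
    rw [Finset.sum_mul]
    refine Finset.sum_congr rfl fun p hp => ?_
    rw [← Finset.HasAntidiagonal.mem_antidiagonal.1 hp, pow_add, hcoef_symm a (b + 1)]
    ring
  rw [← hR] at hrec
  have hd : ((a * (c - b) / (c * (c + 1)) : ℝ) : ℂ) ≠ 0 := by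
    rw [Complex.ofReal_ne_zero]
    have : 0 < c - b := by linarith
    positivity
  rw [Complex.ofReal_add, Complex.ofReal_add, Complex.ofReal_one] at hrec
  rw [hrec]
  have hint : ∫ s : ℝ, 1 / (((2 - 4 * s : ℝ) : ℂ) - z) ∂ν = w / 4 * ∫ s, 1 / (1 - (s : ℂ) * w) ∂ν := by
    rw [← integral_const_mul]
    refine integral_congr_ae (Filter.Eventually.of_forall fun s => ?_)
    have e : ((2 - 4 * s : ℝ) : ℂ) - z = 4 / w * (1 - s * w) := by
      have : z = 2 - 4 / w := by
        field_simp
        linear_combination hw4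
      rw [this]
      push_cast
      field_simp
      ring
    change 1 / (((2 - 4 * s : ℝ) : ℂ) - z) = w / 4 * (1 / (1 - (s : ℂ) * w))
    rw [e, one_div, mul_inv, inv_div, one_div]
  rw [hint]
  generalize (∫ s, 1 / (1 - (s : ℂ) * w) ∂ν) = I
  generalize ((a * (c - b) / (c * (c + 1)) : ℝ) : ℂ) = d at *
  generalize gaussHyper (a : ℂ) ((b : ℂ) + 1) ((c : ℂ) + 1) w = g at *
  field_simp
  ring
end

section
/- Let a, b, c be complex numbers such that c is not a nonpositive integer. Define c_{2j+1} = −(a+j)(c−b+j)/((c+2j)(c+2j+1)) for j ≥ 0, c_{2j} = −(b+j)(c−a+j)/((c+2j−1)(c+2j)) for j ≥ 1, d_j = −c_j, a_0 = 2 − 4d_1, a_n = 2 − 4d_{2n+1} − 4d_{2n+2} for n ≥ 1, b_k² = 16 d_{2k+3} d_{2k+4} for k ≥ 0, and let b_k = (b_k²)^{1/2} be the principal complex square root. Then there exist bounded (continuous) linear operators J and J₀ on the Hilbert space ℓ² = ℓ²(ℕ, ℂ) such that for every x ∈ ℓ² and every n ≥ 0: (J₀ x)(0) = x(1), (J₀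 x)(n+1) = x(n) + x(n+2); (J x)(0) = a_0 x(0) + b_0 x(1), (J x)(n+1) = b_n x(n) + a_{n+1} x(n+1) + b_{n+1} x(n+2); and moreover J − J₀ is a compact operator. -/
noncomputable abbrev H2 := lp (fun _ : ℕ => ℂ) 2

lemma two_pos_aux : 0 < (2 : ENNReal).toReal := by norm_num

lemma diag_exists (w : ℕ → ℂ) (C : ℝ) (hC : 0 ≤ C) (h : ∀ n, ‖w n‖ ≤ C) :
    ∃ T : H2 →L[ℂ] H2, (∀ x n, (T x) n = w n * x n) ∧ ‖T‖ ≤ C := by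
  have hb : ∀ x : H2, ∀ n, ‖w n * x n‖ ≤ ‖((C : ℂ) • x) n‖ := by
    intro x n
    rw [lp.coeFn_smul, Pi.smul_apply, norm_smul, norm_mul, Complex.norm_real, Real.norm_eq_abs,
      abs_of_nonneg hC]
    exact mul_le_mul_of_nonneg_right (h n) (norm_nonneg _)
  have hm : ∀ x : H2, Memℓp (fun n => w n * x n) 2 := fun x =>
    (lp.memℓp ((C : ℂ) • x)).mono' (hb x)
  let T : H2 →ₗ[ℂ] H2 :=
    { toFun := fun x => ⟨fun n => w n * x n, hm x⟩
      map_add' := by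
        intro x y
        ext n
        change w n * (x n + y n) = w n * x n + w n * y n
        ring
      map_smul' := by
        intro r x
        ext n
        change w n * (r * x n) = r * (w n * x n)
        ring }
  have hT : ∀ x, ‖T x‖ ≤ C * ‖x‖ := by
    intro x
    have h1 : ‖T x‖ ≤ ‖(C : ℂ) • x‖ := lp.norm_mono (by norm_num) (hb x)
    rwa [norm_smul, Complex.norm_real, Real.norm_eq_abs, abs_of_nonneg hC] at h1
  exact ⟨T.mkContinuous C hT, fun x n => rfl, T.mkContinuous_norm_le hC hT⟩

lemma diag_finite_compact (w : ℕ → ℂ) (N : ℕ) (T : H2 →L[ℂ] H2)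
    (hT : ∀ x n, (T x) n = (if n < N then w n else 0) * x n) : IsCompactOperator T := by
  have hE : T = ∑ i ∈ Finset.range N,
      (w i • lp.singleContinuousLinearMap ℂ (fun _ : ℕ => ℂ) 2 i).comp
        (lp.evalCLM ℂ (fun _ : ℕ => ℂ) 2 i) := by
    ext x n
    rw [hT, sum_apply, lp.coeFn_sum, Finset.sum_apply]
    have : ∀ i, (((w i • lp.singleContinuousLinearMap ℂ (fun _ : ℕ => ℂ) 2 i).comp
        (lp.evalCLM ℂ (fun _ : ℕ => ℂ) 2 i)) x) n = if n = i then w i * x i else 0 := by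
      intro i
      change w i * (lp.single 2 i (x i) : H2) n = _
      rw [lp.single_apply]
      by_cases hi : n = i
      · subst hi; simp
      · simp [hi]
    simp only [this, Finset.sum_ite_eq, Finset.mem_range]
    split_ifs <;> simp
  rw [hE]
  have hmem : ∀ i ∈ Finset.range N, (w i • lp.singleContinuousLinearMap ℂ (fun _ : ℕ => ℂ) 2 i).comp
        (lp.evalCLM ℂ (fun _ : ℕ => ℂ) 2 i) ∈ 
        {S : H2 →L[ℂ] H2 | IsCompactOperator S} := by
    intro i _
    exact (isCompactOperator_of_locallyCompactSpace_rng 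
      (w i • lp.singleContinuousLinearMap ℂ (fun _ : ℕ => ℂ) 2 i)).comp_clm _
  refine Finset.sum_induction _ (fun S : H2 →L[ℂ] H2 => IsCompactOperator S) ?_ ?_ hmem
  · intro S S' h h'
    exact h.add h'
  · exact isCompactOperator_zero

open Filter Topology in
lemma diag_compact (w : ℕ → ℂ) (hw : Tendsto w atTop (𝓝 0)) :
    ∃ T : H2 →L[ℂ] H2, (∀ x n, (T x) n = w n * x n) ∧ IsCompactOperator T := by
  obtain ⟨C, hC⟩ := hw.norm.bddAbove_range
  have hC' : ∀ n, ‖w n‖ ≤ C := fun n => hC ⟨n, rfl⟩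
  have hC0 : 0 ≤ C := (norm_nonneg _).trans (hC' 0)
  obtain ⟨T, hT, -⟩ := diag_exists w C hC0 hC'
  have hS : ∀ N : ℕ, ∃ S : H2 →L[ℂ] H2, (∀ x n, (S x) n = (if n < N then w n else 0) * x n) := by
    intro N
    obtain ⟨S, hS, -⟩ := diag_exists (fun n => if n < N then w n else 0) C hC0 (by
      intro n
      show ‖ite _ _ _‖ ≤ _
      split_ifs
      · exact hC' n
      · simpa using hC0)
    exact ⟨S, hS⟩
  choose S hS using hS
  refine ⟨T, hT, isCompactOperator_of_tendsto (F := S) (l := atTop) ?_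
    (Eventually.of_forall fun N => diag_finite_compact w N (S N) (hS N))⟩
  rw [Metric.tendsto_atTop]
  intro ε hε
  obtain ⟨N, hN⟩ := (Metric.tendsto_atTop.1 hw) (ε / 2) (by positivity)
  refine ⟨N, fun M hM => ?_⟩
  obtain ⟨D, hD, hDn⟩ := diag_exists (fun n => if n < M then 0 else - w n) (ε / 2) (by positivity) (by
      intro n
      show ‖ite _ _ _‖ ≤ _
      split_ifs with h
      · rw [norm_zero]; positivity
      · have := hN n (by omega)
        rw [dist_zero_right] at this
        rw [norm_neg]
        exact this.le)
  have : S M - T = D := by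
    ext x n
    have e : ((S M - T) x) n = (S M x) n - (T x) n := rfl
    rw [e, hS, hT, hD]
    split_ifs <;> ring
  rw [dist_eq_norm, this]
  linarith

lemma norm_two (x : H2) : ‖x‖ ^ (2 : ENNReal).toReal = ∑' i, ‖x i‖ ^ (2 : ENNReal).toReal :=
  lp.norm_rpow_eq_tsum two_pos_aux x

lemma shiftL_exists : ∃ L : H2 →L[ℂ] H2, ∀ x n, (L x) n = x (n + 1) := by
  have hs : ∀ x : H2, Summable fun n => ‖x n‖ ^ (2 : ENNReal).toReal := fun x =>
    (lp.memℓp x).summable two_pos_aux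
  have hm : ∀ x : H2, Memℓp (fun n => x (n + 1)) 2 := fun x =>
    memℓp_gen ((summable_nat_add_iff 1).2 (hs x))
  let T : H2 →ₗ[ℂ] H2 :=
    { toFun := fun x => ⟨fun n => x (n + 1), hm x⟩
      map_add' := fun x y => rfl
      map_smul' := fun r x => rfl }
  refine ⟨T.mkContinuous 1 ?_, fun x n => rfl⟩
  intro x
  rw [one_mul]
  refine lp.norm_le_of_tsum_le two_pos_aux (norm_nonneg _) ?_
  rw [norm_two, (hs x).tsum_eq_zero_add]
  exact le_add_of_nonneg_left (by positivity)

lemma shiftR_exists : ∃ R : H2 →L[ℂ] H2, ∀ x, (R x) 0 = 0 ∧ ∀ n, (R x) (n + 1) = x n := by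
  have hs : ∀ x : H2, Summable fun n => ‖x n‖ ^ (2 : ENNReal).toReal := fun x =>
    (lp.memℓp x).summable two_pos_aux
  let g : H2 → ℕ → ℂ := fun x n => Nat.casesOn n 0 (fun k => x k)
  have hg : ∀ x : H2, Summable fun n => ‖g x n‖ ^ (2 : ENNReal).toReal := fun x =>
    (summable_nat_add_iff 1).1 (hs x)
  have hm : ∀ x : H2, Memℓp (g x) 2 := fun x => memℓp_gen (hg x)
  let T : H2 →ₗ[ℂ] H2 :=
    { toFun := fun x => ⟨g x, hm x⟩
      map_add' := by
        intro x y
        ext n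
        cases n with
        | zero => exact (add_zero (0 : ℂ)).symm
        | succ k => rfl
      map_smul' := by
        intro r x
        ext n
        cases n with
        | zero => exact (mul_zero r).symm
        | succ k => rfl }
  refine ⟨T.mkContinuous 1 ?_, fun x => ⟨rfl, fun n => rfl⟩⟩
  intro x
  rw [one_mul]
  refine lp.norm_le_of_tsum_le two_pos_aux (norm_nonneg _) ?_
  change ∑' n, ‖g x n‖ ^ (2 : ENNReal).toReal ≤ _
  rw [norm_two, (hg x).tsum_eq_zero_add]
  simp [g]

open Filter Topology in
lemma lin_lim (u v : ℂ) :
    Tendsto (fun j : ℕ => (u + j) / (v + 2 * j)) atTop (𝓝 (1 / 2)) := by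
  have h0 : Tendsto (fun j : ℕ => ((j : ℂ))⁻¹) atTop (𝓝 0) := tendsto_inv_atTop_nhds_zero_nat
  have h1 : Tendsto (fun j : ℕ => (u * (j : ℂ)⁻¹ + 1) / (v * (j : ℂ)⁻¹ + 2)) atTop
      (𝓝 ((u * 0 + 1) / (v * 0 + 2))) :=
    ((h0.const_mul u).add_const 1).div ((h0.const_mul v).add_const 2) (by norm_num)
  have h2 : (u * 0 + 1) / (v * 0 + 2) = (1 / 2 : ℂ) := by norm_num
  rw [h2] at h1
  refine h1.congr' ?_
  filter_upwards [eventually_ge_atTop 1] with j hj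
  have hj0 : (j : ℂ) ≠ 0 := by
    exact_mod_cast (by omega : j ≠ 0)
  rw [← mul_div_mul_right _ _ hj0]
  congr 1 <;> field_simp

open Filter Topology in
lemma quad_lim (u v p q : ℂ) :
    Tendsto (fun j : ℕ => ((u + j) * (v + j)) / ((p + 2 * j) * (q + 2 * j))) atTop
      (𝓝 (1 / 4)) := by
  have h := (lin_lim u p).mul (lin_lim v q)
  rw [show (1 / 2 * (1 / 2) : ℂ) = 1 / 4 by norm_num] at h
  refine h.congr fun j => ?_
  rw [div_mul_div_comm]

/-- The Jacobi matrix `J` built from the hypergeometric parameters and the free Jacobi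
matrix `J₀` define bounded operators on `ℓ²(ℕ, ℂ)`, and `J − J₀` is compact. -/
theorem stmt_12 (a b c : ℂ) (hc : ∀ n : ℕ, c ≠ -(n : ℂ))
    (cseq : ℕ → ℂ)
    (hodd : ∀ j : ℕ,
      cseq (2 * j + 1) = -((a + j) * (c - b + j)) / ((c + 2 * j) * (c + 2 * j + 1)))
    (heven : ∀ j : ℕ, 1 ≤ j →
      cseq (2 * j) = -((b + j) * (c - a + j)) / ((c + 2 * j - 1) * (c + 2 * j)))
    (d : ℕ → ℂ) (hd : ∀ k : ℕ, d k = -cseq k)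
    (A : ℕ → ℂ) (hA0 : A 0 = 2 - 4 * d 1)
    (hA : ∀ n : ℕ, 1 ≤ n → A n = 2 - 4 * d (2 * n + 1) - 4 * d (2 * n + 2))
    (Bsq : ℕ → ℂ) (hBsq : ∀ k : ℕ, Bsq k = 16 * d (2 * k + 3) * d (2 * k + 4))
    (B : ℕ → ℂ) (hB : ∀ k : ℕ, B k = Bsq k ^ ((1 : ℂ) / 2)) :
    ∃ J J₀ : lp (fun _ : ℕ => ℂ) 2 →L[ℂ] lp (fun _ : ℕ => ℂ) 2,
      (∀ x : lp (fun _ : ℕ => ℂ) 2,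
        (J₀ x) 0 = x 1 ∧
        (∀ n : ℕ, (J₀ x) (n + 1) = x n + x (n + 2)) ∧
        (J x) 0 = A 0 * x 0 + B 0 * x 1 ∧
        ∀ n : ℕ, (J x) (n + 1) = B n * x n + A (n + 1) * x (n + 1) + B (n + 1) * x (n + 2)) ∧
      IsCompactOperator (J - J₀ : lp (fun _ : ℕ => ℂ) 2 →L[ℂ] lp (fun _ : ℕ => ℂ) 2) := by
  have hO : Filter.Tendsto (fun j : ℕ => d (2 * j + 1)) Filter.atTop (nhds (1 / 4)) := by
    refine (quad_lim a (c - b) c (c + 1)).congr fun j => ?_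
    rw [hd, hodd, neg_div, neg_neg, add_right_comm c 1]
  have hE : Filter.Tendsto (fun j : ℕ => d (2 * (j + 1))) Filter.atTop (nhds (1 / 4)) := by
    have h := (quad_lim b (c - a) (c - 1) c).comp (Filter.tendsto_add_atTop_nat 1)
    refine h.congr fun j => ?_
    rw [hd, heven (j + 1) (by omega), neg_div, neg_neg]
    simp only [Function.comp]
    rw [show c - 1 + 2 * ((j + 1 : ℕ) : ℂ) = c + 2 * ((j + 1 : ℕ) : ℂ) - 1 by ring]
  have hAl : Filter.Tendsto A Filter.atTop (nhds 0) := by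
    have h := ((hO.const_mul 4).const_sub 2).sub (hE.const_mul 4)
    rw [show (2 - 4 * (1 / 4) - 4 * (1 / 4) : ℂ) = 0 by norm_num] at h
    refine h.congr' ?_
    filter_upwards [Filter.eventually_ge_atTop 1] with n hn
    rw [hA n hn, mul_add, mul_one]
  have hBl : Filter.Tendsto B Filter.atTop (nhds 1) := by
    have h1 := ((hO.comp (Filter.tendsto_add_atTop_nat 1)).const_mul 16).mul
      (hE.comp (Filter.tendsto_add_atTop_nat 1))
    rw [show (16 * (1 / 4) * (1 / 4) : ℂ) = 1 by norm_num] at h1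
    have h2 : Filter.Tendsto Bsq Filter.atTop (nhds 1) := by
      refine h1.congr fun k => ?_
      rw [hBsq]
      rfl
    have h3 : ContinuousAt (fun z : ℂ => z ^ ((1 : ℂ) / 2)) 1 :=
      continuousAt_cpow_const (by simp [Complex.slitPlane])
    have h4 := h3.tendsto.comp h2
    rw [Complex.one_cpow] at h4
    exact h4.congr fun k => (hB k).symm
  have hBl' : Filter.Tendsto (fun n => B n - 1) Filter.atTop (nhds 0) := by
    simpa using hBl.sub_const 1
  obtain ⟨DA, hDA, cA⟩ := diag_compact A hAl
  obtain ⟨DB, hDB, cB⟩ := diag_compact _ hBl'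
  obtain ⟨L, hL⟩ := shiftL_exists
  obtain ⟨R, hR⟩ := shiftR_exists
  refine ⟨(L + R) + (DA + DB.comp L + R.comp DB), L + R, ?_, ?_⟩
  · intro x
    have e0 : ∀ n, ((L + R) x) n = (L x) n + (R x) n := fun n => rfl
    have e1 : ∀ n, (((L + R) + (DA + DB.comp L + R.comp DB)) x) n =
      ((L x) n + (R x) n) + ((DA x) n + (DB (L x)) n + (R (DB x)) n) := fun n => rfl
    refine ⟨?_, fun n => ?_, ?_, fun n => ?_⟩
    · rw [e0, hL, (hR x).1, add_zero]
    · rw [e0, hL, (hR x).2]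
      exact add_comm _ _
    · rw [e1, (hR x).1, (hR (DB x)).1, hDA, hDB, hL, zero_add]
      ring
    · rw [e1, (hR x).2, (hR (DB x)).2, hDA, hDB, hDB, hL]
      ring
  · rw [add_sub_cancel_left]
    exact (cA.add (cB.comp_clm L)).add (cB.clm_comp R)
end
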